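/- For all real a, b > 0, I(a,b) = 1/2 if and only if a = b. -/

import Mathlib

/-- The Beta function `B(a,b) = ∫₀¹ t^(a-1) (1-t)^(b-1) dt`. -/
noncomputable def betaFn (a b : ℝ) : ℝ := ∫ t in (0:ℝ)..1, t ^ (a - 1) * (1 - t) ^ (b - 1)

/-- `I(a,b)`: the probability that a `Beta(a,b)` random variable is `≥ 1/2`. -/
noncomputable def I (a b : ℝ) : ℝ :=
  (1 / betaFn a b) * ∫ t in (1/2 : ℝ)..1, t ^ (a - 1) * (1 - t) ^ (b - 1)

/-!
The reflection `t ↦ 1 - t` exchanges the two shape parameters, whence `I a b + I b a = 1`, and it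
suffices to show that `I b a < I a b` when `b < a`. The normalizing constants agree, and the ratio
of the two integrands is `(t / (1 - t)) ^ (a - b)`, which exceeds `1` throughout `(1/2, 1)`.
-/

open Set MeasureTheory intervalIntegral

lemma integral_lt_integral_of_lt_on_Ioo {f g : ℝ → ℝ} {x y : ℝ} (hxy : x < y)
    (hf : IntervalIntegrable f volume x y) (hg : IntervalIntegrable g volume x y)
    (hfg : ∀ t ∈ Ioo x y, f t < g t) : ∫ t in x..y, f t < ∫ t in x..y, g t := by
  rw [← sub_pos, ← integral_sub hg hf]
  exact intervalIntegral_pos_of_pos_on (hg.sub hf) (fun t ht ↦ sub_pos.2 (hfg t ht)) hxy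

/-- The unnormalized density of the `Beta(a,b)` distribution, meaningful for `t ∈ (0, 1)`. -/
noncomputable def betaKernel (a b t : ℝ) : ℝ := t ^ (a - 1) * (1 - t) ^ (b - 1)

section betaKernel

variable {a b t x y : ℝ}

lemma betaKernel_one_sub (a b t : ℝ) : betaKernel a b (1 - t) = betaKernel b a t := by
  rw [betaKernel, betaKernel, sub_sub_cancel, mul_comm]

lemma betaKernel_pos (a b : ℝ) (ht : t ∈ Ioo 0 1) : 0 < betaKernel a b t :=
  mul_pos (Real.rpow_pos_of_pos ht.1 _) (Real.rpow_pos_of_pos (sub_pos.2 ht.2) _)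

lemma betaKernel_eq_rpow_sub_mul (a b c : ℝ) (ht : 0 < t) :
    betaKernel a b t = t ^ (a - c) * betaKernel c b t := by
  rw [betaKernel, betaKernel, ← mul_assoc, ← Real.rpow_add ht, sub_add_sub_cancel]

lemma betaKernel_swap_lt (hba : b < a) (ht : t ∈ Ioo (1 / 2) 1) :
    betaKernel b a t < betaKernel a b t := by
  have ht₀ : 0 < t := by linarith [ht.1]
  have ht₁ : 0 < 1 - t := sub_pos.2 ht.2
  calc betaKernel b a t
      = (1 - t) ^ (a - b) * betaKernel b b t := by
        rw [← betaKernel_one_sub a b, betaKernel_eq_rpow_sub_mul a b b ht₁, betaKernel_one_sub]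
    _ < t ^ (a - b) * betaKernel b b t := by
        have hpow : (1 - t) ^ (a - b) < t ^ (a - b) :=
          Real.rpow_lt_rpow ht₁.le (by linarith [ht.1]) (sub_pos.2 hba)
        exact mul_lt_mul_of_pos_right hpow (betaKernel_pos b b ⟨ht₀, ht.2⟩)
    _ = betaKernel a b t := (betaKernel_eq_rpow_sub_mul a b b ht₀).symm

lemma ofReal_betaKernel (a b : ℝ) (ht : t ∈ Icc 0 1) :
    (betaKernel a b t : ℂ) = (t : ℂ) ^ ((a : ℂ) - 1) * (1 - (t : ℂ)) ^ ((b : ℂ) - 1) := by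
  rw [betaKernel, Complex.ofReal_mul, Complex.ofReal_cpow ht.1,
    Complex.ofReal_cpow (sub_nonneg.2 ht.2)]
  push_cast
  rfl

lemma intervalIntegrable_betaKernel (ha : 0 < a) (hb : 0 < b)
    (hx : x ∈ Icc 0 1) (hy : y ∈ Icc 0 1) :
    IntervalIntegrable (betaKernel a b) volume x y := by
  have hcomplex : IntervalIntegrable (fun t ↦ (betaKernel a b t : ℂ)) volume 0 1 := by
    refine (Complex.betaIntegral_convergent (u := a) (v := b) ha hb).congr_uIoo fun t ht ↦ ?_
    rw [uIoo_of_le zero_le_one] at ht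
    exact (ofReal_betaKernel a b (Ioo_subset_Icc_self ht)).symm
  have hunit : IntervalIntegrable (betaKernel a b) volume 0 1 :=
    intervalIntegrable_iff.2 (intervalIntegrable_iff.1 hcomplex).re
  refine hunit.mono_set ?_
  rw [uIcc_of_le (zero_le_one' ℝ)]
  exact uIcc_subset_Icc hx hy

lemma integral_betaKernel_swap (a b x y : ℝ) :
    ∫ t in x..y, betaKernel b a t = ∫ t in (1 - y)..(1 - x), betaKernel a b t := by
  simp_rw [← betaKernel_one_sub a b]
  exact integral_comp_sub_left (betaKernel a b) 1

lemma integral_betaKernel_swap_lt (hb : 0 < b) (hba : b < a)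
    (hx : 1 / 2 ≤ x) (hxy : x < y) (hy : y ≤ 1) :
    ∫ t in x..y, betaKernel b a t < ∫ t in x..y, betaKernel a b t := by
  have ha : 0 < a := hb.trans hba
  have hx' : x ∈ Icc 0 1 := ⟨by linarith, by linarith⟩
  have hy' : y ∈ Icc 0 1 := ⟨by linarith, hy⟩
  exact integral_lt_integral_of_lt_on_Ioo hxy (intervalIntegrable_betaKernel hb ha hx' hy')
    (intervalIntegrable_betaKernel ha hb hx' hy')
    fun t ht ↦ betaKernel_swap_lt hba (Ioo_subset_Ioo hx hy ht)

end betaKernel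

section betaFn

variable {a b : ℝ}

lemma betaFn_eq_integral_betaKernel (a b : ℝ) : betaFn a b = ∫ t in 0..1, betaKernel a b t := rfl

lemma I_eq_integral_betaKernel_div (a b : ℝ) :
    I a b = (∫ t in (1 / 2)..1, betaKernel a b t) / betaFn a b :=
  one_div_mul_eq_div _ _

lemma betaFn_comm (a b : ℝ) : betaFn a b = betaFn b a := by
  simpa [betaFn_eq_integral_betaKernel] using integral_betaKernel_swap b a 0 1

lemma betaFn_pos (ha : 0 < a) (hb : 0 < b) : 0 < betaFn a b :=
  intervalIntegral_pos_of_pos_on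
    (intervalIntegrable_betaKernel ha hb (left_mem_Icc.2 zero_le_one) (right_mem_Icc.2 zero_le_one))
    (fun _ ht ↦ betaKernel_pos a b ht) zero_lt_one

lemma I_add_I_swap (ha : 0 < a) (hb : 0 < b) : I a b + I b a = 1 := by
  have hreflect : ∫ t in (1 / 2)..1, betaKernel b a t = ∫ t in 0..(1 / 2), betaKernel a b t := by
    rw [integral_betaKernel_swap]
    norm_num
  have hhalf : (1 / 2 : ℝ) ∈ Icc 0 1 := by norm_num
  have hsplit : (∫ t in 0..(1 / 2), betaKernel a b t) + ∫ t in (1 / 2)..1, betaKernel a b t =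
      betaFn a b :=
    integral_add_adjacent_intervals
      (intervalIntegrable_betaKernel ha hb (left_mem_Icc.2 zero_le_one) hhalf)
      (intervalIntegrable_betaKernel ha hb hhalf (right_mem_Icc.2 zero_le_one))
  rw [I_eq_integral_betaKernel_div, I_eq_integral_betaKernel_div, betaFn_comm b a, ← add_div,
    hreflect, add_comm, hsplit, div_self (betaFn_pos ha hb).ne']

lemma I_swap_lt_I (hb : 0 < b) (hba : b < a) : I b a < I a b := by
  rw [I_eq_integral_betaKernel_div, I_eq_integral_betaKernel_div, betaFn_comm b a]
  exact div_lt_div_of_pos_right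
    (integral_betaKernel_swap_lt hb hba le_rfl one_half_lt_one le_rfl)
    (betaFn_pos (hb.trans hba) hb)

end betaFn

theorem I_eq_half_iff (a b : ℝ) (ha : 0 < a) (hb : 0 < b) :
    I a b = 1 / 2 ↔ a = b := by
  have hsum : I a b + I b a = 1 := I_add_I_swap ha hb
  constructor
  · intro hI
    rcases lt_trichotomy a b with hab | hab | hba
    · linarith [I_swap_lt_I ha hab]
    · exact hab
    · linarith [I_swap_lt_I hb hba]
  · rintro rfl
    linarith
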